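/- Let d ≥ 2 and let I, J be nonempty proper subsets of [d]. Then there exist finitely many pairs (L_1, p_1), …, (L_m, p_m), where each L_t is a nonempty proper subset of [d] and each p_t ∈ ℝ^d, such that the set A = ⋂_{t=1}^m H_{L_t,p_t}^+ approximates T_K for every K ∈ {I, J, I ∪ J} and avoids T_K for every nonempty K ⊆ [d] with K ∉ {I, J, I ∪ J}. In other words, A is an approximating neighbourhood of T_I ∪ T_J ∪ T_{I∪J} represented as a finite intersection of open tropical halfspaces. -/

import Mathlib

open EMetric

/-- `m(x) = min_l x_l`, the minimum coordinate of `x`. -/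
noncomputable def minCoord {d : ℕ} (x : EuclideanSpace ℝ (Fin d)) : ℝ :=
  sInf (Set.range fun l => x l)

/-- `T_K`: the set of points of type `K` with respect to the tropical (min-plus)
hyperplane with apex `0`. -/
noncomputable def tropType {d : ℕ} (K : Finset (Fin d)) :
    Set (EuclideanSpace ℝ (Fin d)) :=
  {x | {k | x k = minCoord x} = (K : Set (Fin d))}

/-- The open tropical halfspace `H_{L,p}^+ = {x : min_{i∈L}(x_i−p_i) < min_{k∉L}(x_k−p_k)}`. -/
noncomputable def openHalfspace {d : ℕ} (L : Finset (Fin d))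
    (p : EuclideanSpace ℝ (Fin d)) : Set (EuclideanSpace ℝ (Fin d)) :=
  {x | sInf ((fun l => x l - p l) '' (L : Set (Fin d))) <
       sInf ((fun l => x l - p l) '' ((L : Set (Fin d))ᶜ))}

/-- `A` approximates `K`: there is `ε > 0` such that every point of `K` at
(Euclidean) distance at least `ε` from the relative boundary `cl K \ K` of `K`
belongs to `A` (with the distance to the empty set taken to be `+∞`). -/
def Approximates {d : ℕ} (A K : Set (EuclideanSpace ℝ (Fin d))) : Prop :=
  ∃ ε > (0 : ℝ), ∀ x ∈ K, ENNReal.ofReal ε ≤ infEdist x (closure K \ K) → x ∈ A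

/-- `A` avoids `K`: there is `ε > 0` such that every point of `K ∩ A` is at
(Euclidean) distance less than `ε` from the relative boundary `cl K \ K` of `K`
(with the distance to the empty set taken to be `+∞`). -/
def Avoids {d : ℕ} (A K : Set (EuclideanSpace ℝ (Fin d))) : Prop :=
  ∃ ε > (0 : ℝ), ∀ x ∈ K ∩ A, infEdist x (closure K \ K) < ENNReal.ofReal ε

/-!
Let `F` be a family of subsets of `[d]` closed under unions, and let `K ∉ F` be nonempty. The union
of the members of `F` contained in `K` is not `K`, so some `k ∈ K` lies in none of them: each
`S ∈ F` containing `k` leaves `K`. The halfspace `H⁺` with `L = [d] \ {k}` and apex `0` on `K`,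
`1` off `K` consists of the `x` for which `x_c - [c ∉ K] < x_k` for some `c ≠ k`. It contains `T_S`
for nonempty `S ∈ F`: take `c ∈ S \ K` if `k ∈ S`, and any `c ∈ S` otherwise. If it contains a point
of `T_K`, then `c ∉ K` and `x_c < m(x) + 1`, and lowering `x_c` to `m(x)` reaches the relative
boundary of `T_K`. Intersecting these halfspaces over all `K ∉ F` gives the neighbourhood, and
`{I, J, I ∪ J}` is closed under unions.
-/

open Metric

theorem supClosed_pair_sup {α : Type*} [SemilatticeSup α] (a b : α) :
    SupClosed ({a, b, a ⊔ b} : Set α) := by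
  rintro x (rfl | rfl | rfl) y (rfl | rfl | rfl) <;> simp [sup_comm]

theorem exists_mem_forall_not_subset_of_supClosed {α : Type*} [DecidableEq α]
    {F : Set (Finset α)} (hF : SupClosed F) {K : Finset α} (hK : K.Nonempty) (hKF : K ∉ F) :
    ∃ k ∈ K, ∀ S ∈ F, k ∈ S → ¬ S ⊆ K := by
  by_contra! hcover
  choose! S hSF hkS hSK using hcover
  have hsup : K.sup S = K :=
    (Finset.sup_le hSK).antisymm fun k hk => Finset.le_sup (f := S) hk (hkS k hk)
  exact hKF (hsup ▸ hF.finsetSup_mem hK hSF)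

section

variable {d : ℕ} {K S : Finset (Fin d)} {x : EuclideanSpace ℝ (Fin d)} {i k : Fin d}

theorem minCoord_le (x : EuclideanSpace ℝ (Fin d)) (l : Fin d) : minCoord x ≤ x l :=
  csInf_le (Set.finite_range _).bddBelow ⟨l, rfl⟩

theorem minCoord_eq (h : ∀ l, x i ≤ x l) : minCoord x = x i :=
  IsLeast.csInf_eq ⟨⟨i, rfl⟩, Set.forall_mem_range.2 h⟩

theorem mem_tropType_iff (hi : i ∈ K) :
    x ∈ tropType K ↔ (∀ k ∈ K, x k = x i) ∧ ∀ k ∉ K, x i < x k := by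
  have mem_iff : x ∈ tropType K ↔ ∀ k, x k = minCoord x ↔ k ∈ K := Set.ext_iff
  rw [mem_iff]
  constructor
  · intro hx
    have hxi : x i = minCoord x := (hx i).2 hi
    exact ⟨fun k hk => ((hx k).2 hk).trans hxi.symm, fun k hk =>
      hxi ▸ (minCoord_le x k).lt_of_ne' (mt (hx k).1 hk)⟩
  · rintro ⟨heq, hlt⟩ k
    have hmin : minCoord x = x i := minCoord_eq fun l =>
      if hl : l ∈ K then (heq l hl).ge else (hlt l hl).le
    rw [hmin]
    exact ⟨fun hk => by_contra fun hkK => (hlt k hkK).ne' hk, heq k⟩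

theorem add_single_mem_tropType_iff (hx : x ∈ tropType K) (hi : i ∈ K) (hk : k ∉ K) (t : ℝ) :
    x + EuclideanSpace.single k t ∈ tropType K ↔ x i < x k + t := by
  obtain ⟨heq, hlt⟩ := (mem_tropType_iff hi).1 hx
  have apply_of_ne : ∀ l ≠ k, (x + EuclideanSpace.single k t) l = x l := by simp +contextual
  have ne_of_mem : ∀ l ∈ K, l ≠ k := fun l hl => ne_of_mem_of_not_mem hl hk
  rw [mem_tropType_iff hi, apply_of_ne i (ne_of_mem i hi)]
  constructor
  · intro h
    simpa using h.2 k hk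
  · refine fun h => ⟨fun l hl => (apply_of_ne l (ne_of_mem l hl)).trans (heq l hl), fun l hl => ?_⟩
    obtain rfl | hlk := eq_or_ne l k
    · simpa using h
    · simpa only [apply_of_ne l hlk] using hlt l hl

theorem infEDist_closure_diff_tropType_le (hx : x ∈ tropType K) (hi : i ∈ K) (hk : k ∉ K) :
    infEDist x (closure (tropType K) \ tropType K) ≤ ENNReal.ofReal (x k - x i) := by
  let move (t : ℝ) : EuclideanSpace ℝ (Fin d) := x + EuclideanSpace.single k t
  have move_mem_iff (t : ℝ) : move t ∈ tropType K ↔ x i < x k + t :=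
    add_single_mem_tropType_iff hx hi hk t
  have move_continuous : Continuous move :=
    continuous_const.add <|
      Isometry.continuous fun s t => PiLp.edist_single_same 2 (fun _ => ℝ) k s t
  have mem_closure : move (x i - x k) ∈ closure (tropType K) := by
    refine map_mem_closure (s := Set.Ioi (x i - x k)) move_continuous (by simp) fun t ht => ?_
    exact (move_mem_iff t).2 (sub_lt_iff_lt_add'.1 ht)
  have notMem : move (x i - x k) ∉ tropType K := by simp [move_mem_iff]
  have hik : x i < x k := ((mem_tropType_iff hi).1 hx).2 k hk
  calc infEDist x (closure (tropType K) \ tropType K)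
      ≤ edist x (move (x i - x k)) := infEDist_le_edist_of_mem ⟨mem_closure, notMem⟩
    _ = ENNReal.ofReal (x k - x i) := by
      rw [edist_dist, dist_self_add_right, PiLp.norm_single, Real.norm_eq_abs, abs_sub_comm,
        abs_of_pos (sub_pos.2 hik)]

theorem mem_openHalfspace_iff {L : Finset (Fin d)} (hL : L.Nonempty) (hL' : L ≠ Finset.univ)
    {p : EuclideanSpace ℝ (Fin d)} :
    x ∈ openHalfspace L p ↔ ∃ a ∈ L, ∀ b ∉ L, x a - p a < x b - p b := by
  have hLc : ((L : Set (Fin d))ᶜ).Nonempty := by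
    simpa [Set.nonempty_compl] using hL'
  rw [openHalfspace, Set.mem_ofPred_eq,
    csInf_lt_iff (Set.toFinite _).bddBelow (hL.to_set.image _), Set.exists_mem_image]
  simp only [(Set.toFinite _).lt_csInf_iff (hLc.image _), Set.forall_mem_image, Set.mem_compl_iff,
    Finset.mem_coe]

/-- The point with coordinates `0` on `K` and `1` off `K`. Halfspaces with this apex separate
`T_K` from types that leave `K`. -/
noncomputable def complIndicator (K : Finset (Fin d)) : EuclideanSpace ℝ (Fin d) :=
  WithLp.toLp 2 fun c => if c ∈ K then 0 else 1

theorem complIndicator_of_mem (hk : k ∈ K) : complIndicator K k = 0 := if_pos hk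

theorem complIndicator_of_notMem (hk : k ∉ K) : complIndicator K k = 1 := if_neg hk

theorem complIndicator_nonneg (K : Finset (Fin d)) (k : Fin d) : 0 ≤ complIndicator K k := by
  by_cases hk : k ∈ K
  · rw [complIndicator_of_mem hk]
  · simp [complIndicator_of_notMem hk]

variable [Nontrivial (Fin d)]

theorem compl_singleton_nonempty_and_ne_univ (k : Fin d) :
    ({k}ᶜ : Finset (Fin d)).Nonempty ∧ ({k}ᶜ : Finset (Fin d)) ≠ Finset.univ := by
  obtain ⟨j, hjk⟩ := exists_ne k
  exact ⟨⟨j, by simpa using hjk⟩, by simp⟩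

theorem mem_openHalfspace_complIndicator_iff (hk : k ∈ K) :
    x ∈ openHalfspace {k}ᶜ (complIndicator K) ↔ ∃ c ≠ k, x c - complIndicator K c < x k := by
  obtain ⟨hL, hL'⟩ := compl_singleton_nonempty_and_ne_univ k
  simp [mem_openHalfspace_iff hL hL', complIndicator_of_mem hk]

theorem tropType_subset_openHalfspace_complIndicator (hS : S.Nonempty) (hk : k ∈ K)
    (hSK : k ∈ S → ¬ S ⊆ K) : tropType S ⊆ openHalfspace {k}ᶜ (complIndicator K) := by
  intro x hx
  rw [mem_openHalfspace_complIndicator_iff hk]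
  by_cases hkS : k ∈ S
  · obtain ⟨c, hcS, hcK⟩ := Finset.not_subset.1 (hSK hkS)
    refine ⟨c, (ne_of_mem_of_not_mem hk hcK).symm, ?_⟩
    rw [complIndicator_of_notMem hcK, ((mem_tropType_iff hkS).1 hx).1 c hcS]
    exact sub_one_lt _
  · obtain ⟨c, hcS⟩ := hS
    refine ⟨c, ne_of_mem_of_not_mem hcS hkS, ?_⟩
    exact (sub_le_self _ (complIndicator_nonneg K c)).trans_lt
      (((mem_tropType_iff hcS).1 hx).2 k hkS)

theorem avoids_openHalfspace_complIndicator (hk : k ∈ K) :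
    Avoids (openHalfspace {k}ᶜ (complIndicator K)) (tropType K) := by
  refine ⟨1, one_pos, fun x ⟨hx, hxH⟩ => ?_⟩
  obtain ⟨c, -, hc⟩ := (mem_openHalfspace_complIndicator_iff hk).1 hxH
  have hcK : c ∉ K := fun hcK => by
    rw [complIndicator_of_mem hcK, sub_zero] at hc
    exact hc.ne (((mem_tropType_iff hk).1 hx).1 c hcK)
  have hgap : x c - x k < 1 := by
    rw [complIndicator_of_notMem hcK] at hc
    linarith
  exact (infEDist_closure_diff_tropType_le hx hk hcK).trans_lt
    ((ENNReal.ofReal_lt_ofReal_iff one_pos).2 hgap)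

end

theorem Approximates.of_subset {d : ℕ} {A K : Set (EuclideanSpace ℝ (Fin d))} (h : K ⊆ A) :
    Approximates A K :=
  ⟨1, one_pos, fun _ hx _ => h hx⟩

theorem Avoids.mono {d : ℕ} {A B K : Set (EuclideanSpace ℝ (Fin d))} (hB : Avoids B K)
    (h : A ⊆ B) : Avoids A K :=
  let ⟨ε, hε, hdist⟩ := hB
  ⟨ε, hε, fun x hx => hdist x ⟨hx.1, h hx.2⟩⟩

theorem stmt_11_general {d : ℕ} (hd : 2 ≤ d) {F : Set (Finset (Fin d))} (hF : SupClosed F) :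
    ∃ (m : ℕ) (L : Fin m → Finset (Fin d)) (p : Fin m → EuclideanSpace ℝ (Fin d)),
      (∀ t, (L t).Nonempty ∧ L t ≠ Finset.univ) ∧
      (∀ K : Finset (Fin d), K.Nonempty →
        (K ∈ F → tropType K ⊆ ⋂ t, openHalfspace (L t) (p t)) ∧
        (K ∉ F → Avoids (⋂ t, openHalfspace (L t) (p t)) (tropType K))) := by
  have : Nontrivial (Fin d) := Fin.nontrivial_iff_two_le.2 hd
  let Excluded := {K : Finset (Fin d) // K.Nonempty ∧ K ∉ F}
  choose k hkK hkF using fun K : Excluded =>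
    exists_mem_forall_not_subset_of_supClosed hF K.2.1 K.2.2
  obtain ⟨m, ⟨e⟩⟩ := Finite.exists_equiv_fin Excluded
  refine ⟨m, fun t => {k (e.symm t)}ᶜ, fun t => complIndicator (e.symm t).1,
    fun t => compl_singleton_nonempty_and_ne_univ _, fun K hK => ?_⟩
  rw [e.symm.surjective.iInter_comp fun K => openHalfspace {k K}ᶜ (complIndicator K.1)]
  exact ⟨fun hKF => Set.subset_iInter fun K' =>
      tropType_subset_openHalfspace_complIndicator hK (hkK K') (hkF K' K hKF),
    fun hKF => (avoids_openHalfspace_complIndicator (hkK ⟨K, hK, hKF⟩)).mono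
      (Set.iInter_subset _ _)⟩

theorem stmt_11 {d : ℕ} (hd : 2 ≤ d) (I J : Finset (Fin d))
    (hI : I.Nonempty) (hI' : I ≠ Finset.univ)
    (hJ : J.Nonempty) (hJ' : J ≠ Finset.univ) :
    ∃ (m : ℕ) (L : Fin m → Finset (Fin d)) (p : Fin m → EuclideanSpace ℝ (Fin d)),
      (∀ t, (L t).Nonempty ∧ L t ≠ Finset.univ) ∧
      (∀ K : Finset (Fin d), K.Nonempty →
        ((K = I ∨ K = J ∨ K = I ∪ J) →
          Approximates (⋂ t, openHalfspace (L t) (p t)) (tropType K)) ∧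
        (¬ (K = I ∨ K = J ∨ K = I ∪ J) →
          Avoids (⋂ t, openHalfspace (L t) (p t)) (tropType K))) := by
  obtain ⟨m, L, p, hL, hA⟩ := stmt_11_general hd (supClosed_pair_sup I J)
  exact ⟨m, L, p, hL, fun K hK => ⟨fun h => .of_subset ((hA K hK).1 h), (hA K hK).2⟩⟩
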